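/- Let X be a metric space. Suppose p_n : X → ℝ ∪ {+∞} converges continuously to p : X → ℝ ∪ {+∞} and q_n : X → ℝ ∪ {+∞} epi-converges to q : X → ℝ ∪ {+∞}. Then the sum p_n + q_n epi-converges to p + q. -/

import Mathlib

/-!
Superadditivity of `liminf` gives the lower bound (a) for the sum, and subadditivity of `limsup`
along a recovery sequence for `q` gives the upper bound (b): continuous convergence makes
`p n (u n)` converge to `p₀ x` along every `u → x`, in particular along that recovery sequence.
In `EReal` subadditivity of `limsup` requires that `⊤ + ⊥` and `⊥ + ⊤` do not occur; this holds
because both limits are different from `⊥`.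
-/

open Filter Topology MeasureTheory Set

noncomputable section

/-- Epi-convergence of a sequence of extended-real-valued functions on a metric space:
for every `x`, (a) `liminf f n (u n) ≥ g x` along every sequence `u → x`, and
(b) `limsup f n (u n) ≤ g x` along some sequence `u → x`. -/
def EpiConv {X : Type*} [MetricSpace X] (f : ℕ → X → EReal) (g : X → EReal) : Prop :=
  ∀ x : X,
    (∀ u : ℕ → X, Tendsto u atTop (𝓝 x) → g x ≤ atTop.liminf fun n => f n (u n)) ∧
    (∃ u : ℕ → X, Tendsto u atTop (𝓝 x) ∧ (atTop.limsup fun n => f n (u n)) ≤ g x)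

/-- Continuous convergence: `f n (u n) → g x` for every `x` and every sequence `u → x`. -/
def ContConv {X : Type*} [MetricSpace X] (f : ℕ → X → EReal) (g : X → EReal) : Prop :=
  ∀ x : X, ∀ u : ℕ → X, Tendsto u atTop (𝓝 x) →
    Tendsto (fun n => f n (u n)) atTop (𝓝 (g x))

/-- Infimal value of `h` on `C`. -/
def vOn {X : Type*} (h : X → EReal) (C : Set X) : EReal := ⨅ x ∈ C, h x

open Classical in
/-- ε-infimal value of `h` on `C`: `inf_C h + ε` if `inf_C h > -∞`, and `-1/ε` otherwise
(with the convention `1/0 = +∞`, so `-1/0 = -∞`). -/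
def vEpsOn {X : Type*} (h : X → EReal) (C : Set X) (ε : ℝ) : EReal :=
  if vOn h C = ⊥ then (if ε = 0 then ⊥ else ((-ε⁻¹ : ℝ) : EReal))
  else vOn h C + (ε : EReal)

/-- ε-argmin of `h` on `C`: the points of `C` where `h` is below the ε-infimal value. -/
def argminOn {X : Type*} (h : X → EReal) (C : Set X) (ε : ℝ) : Set X :=
  {x ∈ C | h x ≤ vEpsOn h C ε}

/-- Painlevé–Kuratowski outer limit: points whose distance to `S n` has liminf 0. -/
def outerLim {X : Type*} [MetricSpace X] (S : ℕ → Set X) : Set X :=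
  {x | atTop.liminf (fun n => EMetric.infEdist x (S n)) = 0}

/-- Painlevé–Kuratowski inner limit: points whose distance to `S n` has limsup 0. -/
def innerLim {X : Type*} [MetricSpace X] (S : ℕ → Set X) : Set X :=
  {x | atTop.limsup (fun n => EMetric.infEdist x (S n)) = 0}

open Classical in
/-- Indicator function `δ_A`: `0` on `A`, `+∞` off `A`. -/
def delta {X : Type*} (A : Set X) : X → EReal := fun x => if x ∈ A then 0 else ⊤

/-- The sequence `g n` is eventually level-compact on the sets `C n`: for every level `α`
there is `N` such that the union over `n ≥ N` of the `α`-sublevel sets of `g n` on `C n`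
is relatively compact. -/
def EvLevelCompact {X : Type*} [MetricSpace X] (g : ℕ → X → EReal) (C : ℕ → Set X) : Prop :=
  ∀ α : ℝ, ∃ N : ℕ, IsCompact (closure (⋃ n ∈ Ici N, {x ∈ C n | g n x ≤ (α : EReal)}))

/-- Measurability of a set-valued map: preimages of open sets are measurable. -/
def MeasurableMultifun {Ξ X : Type*} [MeasurableSpace Ξ] [TopologicalSpace X]
    (M : Ξ → Set X) : Prop :=
  ∀ U : Set X, IsOpen U → MeasurableSet {ξ | (M ξ ∩ U).Nonempty}

/-- `P` is the countable product `ℙ^∞` of the probability measure `ℙ`: every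
finite-dimensional cylinder has product measure. -/
def IsProductMeasure {Ξ : Type*} [MeasurableSpace Ξ] (P : Measure (ℕ → Ξ))
    (ℙ : Measure Ξ) : Prop :=
  ∀ (s : Finset ℕ) (A : ℕ → Set Ξ), (∀ i, MeasurableSet (A i)) →
    P {ω | ∀ i ∈ s, ω i ∈ A i} = ∏ i ∈ s, ℙ (A i)

/-- Moreau envelope `e_λ g`. -/
def moreau {d : ℕ} (g : EuclideanSpace ℝ (Fin d) → EReal) (lam : ℝ)
    (x : EuclideanSpace ℝ (Fin d)) : EReal :=
  ⨅ u, g u + ((‖x - u‖ ^ 2 / (2 * lam) : ℝ) : EReal)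

/-- if `p n` (with values in ℝ ∪ {+∞}) converges continuously to `p₀` and
`q n` (with values in ℝ ∪ {+∞}) epi-converges to `q₀`, then `p n + q n` epi-converges
to `p₀ + q₀`. -/
theorem sum_of_contConv_epiConv {X : Type*} [MetricSpace X]
    (p q : ℕ → X → EReal) (p₀ q₀ : X → EReal)
    (hp_noBot : ∀ n x, p n x ≠ ⊥) (hp₀_noBot : ∀ x, p₀ x ≠ ⊥)
    (hq_noBot : ∀ n x, q n x ≠ ⊥) (hq₀_noBot : ∀ x, q₀ x ≠ ⊥)
    (hp : ContConv p p₀) (hq : EpiConv q q₀) :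
    EpiConv (fun n x => p n x + q n x) (fun x => p₀ x + q₀ x) := by
  intro x
  obtain ⟨hlow, u, hu, hup⟩ := hq x
  refine ⟨fun w hw => ?_, u, hu, ?_⟩
  · calc p₀ x + q₀ x
        ≤ atTop.liminf (fun n => p n (w n)) + atTop.liminf (fun n => q n (w n)) :=
          add_le_add (hp x w hw).liminf_eq.ge (hlow w hw)
      _ ≤ _ := EReal.le_liminf_add
  · have hP := (hp x u hu).limsup_eq
    -- The lower bound (a) along the recovery sequence keeps `limsup q n (u n)` away from `⊥`,
    -- which excludes `⊤ + ⊥` in subadditivity of `limsup`; `p₀ x ≠ ⊥` excludes `⊥ + ⊤`.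
    have hQ : (atTop.limsup fun n => q n (u n)) ≠ ⊥ := fun h =>
      hq₀_noBot x (le_bot_iff.1 (h ▸ (hlow u hu).trans liminf_le_limsup))
    calc atTop.limsup (fun n => p n (u n) + q n (u n))
        ≤ atTop.limsup (fun n => p n (u n)) + atTop.limsup (fun n => q n (u n)) :=
          EReal.limsup_add_le (.inl (hP ▸ hp₀_noBot x)) (.inr hQ)
      _ ≤ p₀ x + q₀ x := add_le_add hP.le hup
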